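/- arXiv:2504.14352 — 2 statements merged into one kernel-verified Lean document; each statement's English description precedes it below -/
import Mathlib

section
/- Let G be a finite connected simple graph with at least two vertices, with minimum vertex degree δ(G) and edge-connectivity k'(G). If κ_LLY(x,y) > 0 for every pair of adjacent vertices x and y, then k'(G) = δ(G). -/
/-!
The inequality `k' ≤ δ` comes from isolating a vertex of minimum degree. For the converse, take
a vertex set `X` with the fewest edges to its complement `Y`, and suppose that this number `k'`
is smaller than `δ`. Let `A ⊆ X` and `B ⊆ Y` be the sets of endpoints of the cut edges.

If `f` has increments at most `1` along edges and `f y - f x = 1` for an edge `xy`, then weak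
Kantorovich duality gives `κ_LLY(x, y) ≤ Δf(x) - Δf(y)` (`kappaLLY_le`). This is used for the
signed distance to the cut, with value `-1` on `X \ A`, `0` on `A`, `1` on `B` and `2` on
`Y \ B`. It yields `gain x + gain y > 0` for each cut edge `xy` (`gain_add_gain_pos`), where
for `x ∈ A` with `s` neighbours in `Y` and `a` neighbours in `A`
`gain x = (2 s + a) / d_x - 1 ≤ (2 s + |A| - 1) / δ - 1`, and similarly on the other side.

Two distinct vertices of `A` with `s₁` and `s₂` neighbours in `Y` satisfy
`s₁ + s₂ + |A| - 2 ≤ k' ≤ δ - 1`, so their total gain is at most `0`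
(`gain_add_gain_nonpos`); the same holds in `B`. Adding up the gains of the four endpoints
shows that no two cut edges are disjoint, so the cut edges form a star. If its center is
`x ∈ A`, moving `x` to the other side gives a cut with `d_x - k'` edges, so `2 k' ≤ d_x` by
minimality. Then `gain x ≤ 0`, and also `gain y ≤ 0` for each neighbour `y` of `x` in `B`, a
contradiction (`bdry_ne_singleton`).
-/

open Filter Finset

attribute [local instance] Classical.propDecidable

variable {V : Type*}

/-- The measure `μ_x^p`. -/
noncomputable def muP [Fintype V] (G : SimpleGraph V) (p : ℝ) (x : V) : V → ℝ :=
  fun z => if z = x then p else if G.Adj x z then (1 - p) / (G.degree x) else 0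

/-- A transport plan between two measures. -/
def IsTransportPlan [Fintype V] (μ₁ μ₂ : V → ℝ) (π : V → V → ℝ) : Prop :=
  (∀ u v, 0 ≤ π u v ∧ π u v ≤ 1) ∧
  (∀ u, ∑ v, π u v = μ₁ u) ∧ (∀ v, ∑ u, π u v = μ₂ v)

/-- The cost of a transport plan. -/
noncomputable def planCost [Fintype V] (G : SimpleGraph V) (π : V → V → ℝ) : ℝ :=
  ∑ u, ∑ v, (G.dist u v : ℝ) * π u v

/-- The Wasserstein distance between two measures on a graph. -/
noncomputable def Wdist [Fintype V] (G : SimpleGraph V) (μ₁ μ₂ : V → ℝ) : ℝ :=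
  sInf {c : ℝ | ∃ π, IsTransportPlan μ₁ μ₂ π ∧ c = planCost G π}

/-- The Lin-Lu-Yau curvature of a pair of vertices. -/
noncomputable def kappaLLY [Fintype V] (G : SimpleGraph V) (x y : V) : ℝ :=
  limUnder (nhdsWithin 1 (Set.Iio (1 : ℝ)))
    (fun p => (1 - Wdist G (muP G p x) (muP G p y) / (G.dist x y)) / (1 - p))

/-- `κ_LLY^{(i)}(G)`: infimum of the curvature over pairs at distance `i`. -/
noncomputable def kappaLLYscale [Fintype V] (G : SimpleGraph V) (i : ℕ) : ℝ :=
  sInf {k : ℝ | ∃ x y : V, G.dist x y = i ∧ k = kappaLLY G x y}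

/-- `κ_LLY(G)`: infimum of the curvature over adjacent pairs. -/
noncomputable def kappaLLYedge [Fintype V] (G : SimpleGraph V) : ℝ :=
  sInf {k : ℝ | ∃ x y : V, G.Adj x y ∧ k = kappaLLY G x y}

/-- The vertex connectivity `k(G)`. -/
noncomputable def vertexConnectivity [Fintype V] (G : SimpleGraph V) : ℕ :=
  sInf {n : ℕ | ∃ S : Finset V, S.card = n ∧
    (¬ (G.induce ((S : Set V)ᶜ)).Connected ∨ ((S : Set V)ᶜ).Subsingleton)}

/-- The edge connectivity `k'(G)`. -/
noncomputable def edgeConnectivity [Fintype V] (G : SimpleGraph V) : ℕ :=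
  sInf {n : ℕ | ∃ F : Finset (Sym2 V), F.card = n ∧ (F : Set (Sym2 V)) ⊆ G.edgeSet ∧
    ¬ (G.deleteEdges (F : Set (Sym2 V))).Connected}

/-- Amply regular graph with parameters `(d, α, β)`. -/
def IsAmplyRegular [Fintype V] (G : SimpleGraph V) (d α β : ℕ) : Prop :=
  G.IsRegularOfDegree d ∧
  (∀ u v, G.Adj u v → (G.neighborFinset u ∩ G.neighborFinset v).card = α) ∧
  (∀ u v : V, G.dist u v = 2 → (G.neighborFinset u ∩ G.neighborFinset v).card = β)

/-- A matching given as a finite set of ordered pairs satisfying a constraint `P`. -/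
def IsPairMatching (P : V → V → Prop) (M : Finset (V × V)) : Prop :=
  (∀ e ∈ M, P e.1 e.2) ∧
  ∀ e ∈ M, ∀ f ∈ M, e ≠ f → e.1 ≠ f.1 ∧ e.1 ≠ f.2 ∧ e.2 ≠ f.1 ∧ e.2 ≠ f.2

/-! ### Weak Kantorovich duality and existence of the curvature limit -/

/-- The normalized Laplacian `Δf(x) = (1/d_x) ∑_{z ∼ x} (f z - f x)`. -/
noncomputable def lap [Fintype V] (G : SimpleGraph V) (f : V → ℝ) (x : V) : ℝ :=
  (∑ z ∈ G.neighborFinset x, (f z - f x)) / G.degree x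

lemma sub_le_dist_of_adj (G : SimpleGraph V) (hconn : G.Connected) (f : V → ℝ)
    (hf : ∀ u v, G.Adj u v → f v - f u ≤ 1) (u v : V) : f v - f u ≤ G.dist u v := by
  obtain ⟨p, hp⟩ := hconn.exists_walk_length_eq_dist u v
  rw [← hp]
  clear hp
  induction p with
  | nil => simp
  | cons h p ih =>
    have := hf _ _ h
    rw [SimpleGraph.Walk.length_cons]
    push_cast
    linarith

lemma sum_mul_muP [Fintype V] (G : SimpleGraph V) (f : V → ℝ) (p : ℝ) (x : V)
    (hx : 0 < G.degree x) :
    ∑ z, f z * muP G p x z = f x + (1 - p) * lap G f x := by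
  have h1 : ∀ z, f z * muP G p x z
      = (if z = x then f z * p else 0)
        + (if z ∈ G.neighborFinset x then f z * ((1 - p) / G.degree x) else 0) := by
    intro z
    unfold muP
    by_cases hz : z = x
    · subst hz; simp
    · simp [hz]
  have hd : (G.degree x : ℝ) ≠ 0 := by exact_mod_cast hx.ne'
  simp_rw [h1]
  rw [Finset.sum_add_distrib, Finset.sum_ite_eq' Finset.univ x (fun z => f z * p),
    Finset.sum_ite_mem, Finset.univ_inter, ← Finset.sum_mul, lap, Finset.sum_sub_distrib,
    Finset.sum_const, SimpleGraph.card_neighborFinset_eq_degree]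
  simp only [Finset.mem_univ, if_true, nsmul_eq_mul]
  field_simp
  ring

lemma sum_muP [Fintype V] (G : SimpleGraph V) (p : ℝ) (x : V) (hx : 0 < G.degree x) :
    ∑ z, muP G p x z = 1 := by
  have := sum_mul_muP G (fun _ => 1) p x hx
  simpa [lap] using this

lemma muP_nonneg [Fintype V] (G : SimpleGraph V) (p : ℝ) (hp0 : 0 ≤ p) (hp1 : p ≤ 1) (x z : V) :
    0 ≤ muP G p x z := by
  unfold muP
  have : 0 ≤ 1 - p := by linarith
  split_ifs <;> positivity

/-- The independent coupling. -/
lemma exists_isTransportPlan [Fintype V] (μ₁ μ₂ : V → ℝ) (h1 : ∀ u, 0 ≤ μ₁ u)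
    (h2 : ∀ u, 0 ≤ μ₂ u) (hs1 : ∑ u, μ₁ u = 1) (hs2 : ∑ u, μ₂ u = 1) :
    ∃ π, IsTransportPlan μ₁ μ₂ π := by
  refine ⟨fun u v => μ₁ u * μ₂ v, fun u v => ⟨mul_nonneg (h1 u) (h2 v), ?_⟩, fun u => ?_,
    fun v => ?_⟩
  · have a1 : μ₁ u ≤ 1 := hs1 ▸ Finset.single_le_sum (fun i _ => h1 i) (Finset.mem_univ u)
    have a2 : μ₂ v ≤ 1 := hs2 ▸ Finset.single_le_sum (fun i _ => h2 i) (Finset.mem_univ v)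
    exact mul_le_one₀ a1 (h2 v) a2
  · rw [← Finset.mul_sum, hs2, mul_one]
  · rw [← Finset.sum_mul, hs1, one_mul]

lemma planCost_nonneg [Fintype V] (G : SimpleGraph V) {μ₁ μ₂ : V → ℝ} {π : V → V → ℝ}
    (h : IsTransportPlan μ₁ μ₂ π) : 0 ≤ planCost G π :=
  Finset.sum_nonneg fun u _ => Finset.sum_nonneg fun v _ =>
    mul_nonneg (Nat.cast_nonneg _) (h.1 u v).1

lemma bddBelow_planCost [Fintype V] (G : SimpleGraph V) (μ₁ μ₂ : V → ℝ) :
    BddBelow {c : ℝ | ∃ π, IsTransportPlan μ₁ μ₂ π ∧ c = planCost G π} :=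
  ⟨0, by rintro c ⟨π, hπ, rfl⟩; exact planCost_nonneg G hπ⟩

/-- Weak duality: a function with increments at most `1` along edges bounds every
transport cost from below. -/
lemma sub_le_planCost [Fintype V] (G : SimpleGraph V) (hconn : G.Connected) (f : V → ℝ)
    (hf : ∀ u v, G.Adj u v → f v - f u ≤ 1) {μ₁ μ₂ : V → ℝ} {π : V → V → ℝ}
    (h : IsTransportPlan μ₁ μ₂ π) :
    ∑ v, f v * μ₂ v - ∑ u, f u * μ₁ u ≤ planCost G π := by
  have e : ∑ v, f v * μ₂ v - ∑ u, f u * μ₁ u = ∑ u, ∑ v, (f v - f u) * π u v := by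
    simp_rw [← h.2.1, ← h.2.2, sub_mul, Finset.sum_sub_distrib, Finset.mul_sum]
    rw [Finset.sum_comm]
  rw [e]
  exact Finset.sum_le_sum fun u _ => Finset.sum_le_sum fun v _ =>
    mul_le_mul_of_nonneg_right (sub_le_dist_of_adj G hconn f hf u v) (h.1 u v).1

/-- Mixing a plan for laziness `p` with the point mass at `(x, y)` gives a plan for any
laziness `q` between `p` and `1`. -/
lemma isTransportPlan_mix [Fintype V] (G : SimpleGraph V) {x y : V} {p q : ℝ}
    (hp1 : p < 1) (hpq : p ≤ q) (hq1 : q < 1) {π : V → V → ℝ}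
    (h : IsTransportPlan (muP G p x) (muP G p y) π) :
    IsTransportPlan (muP G q x) (muP G q y)
      (fun u v => (1 - q) / (1 - p) * π u v
        + (1 - (1 - q) / (1 - p)) * (if u = x then if v = y then 1 else 0 else 0)) := by
  have hp : 0 < 1 - p := by linarith
  have hl0 : 0 ≤ (1 - q) / (1 - p) := div_nonneg (by linarith) hp.le
  have hl1 : (1 - q) / (1 - p) ≤ 1 := (div_le_one hp).2 (by linarith)
  have key : ∀ w z : V, (1 - q) / (1 - p) * muP G p w z
      + (1 - (1 - q) / (1 - p)) * (if z = w then 1 else 0) = muP G q w z := by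
    intro w z
    unfold muP
    split_ifs
    · field_simp; ring
    · field_simp; ring
    · ring
  refine ⟨fun u v => ?_, fun u => ?_, fun v => ?_⟩
  · obtain ⟨h0, h1⟩ := h.1 u v
    have hm0 : (0 : ℝ) ≤ if u = x then if v = y then 1 else 0 else 0 := by
      split_ifs <;> norm_num
    have hm1 : (if u = x then if v = y then (1 : ℝ) else 0 else 0) ≤ 1 := by
      split_ifs <;> norm_num
    generalize (1 - q) / (1 - p) = l at *
    constructor
    · have := mul_nonneg hl0 h0
      have := mul_nonneg (sub_nonneg.2 hl1) hm0
      linarith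
    · nlinarith [mul_le_mul_of_nonneg_left h1 hl0,
        mul_le_mul_of_nonneg_left hm1 (sub_nonneg.2 hl1)]
  · rw [Finset.sum_add_distrib, ← Finset.mul_sum, ← Finset.mul_sum, h.2.1, ← key x u]
    congr 2
    split_ifs <;> simp
  · rw [Finset.sum_add_distrib, ← Finset.mul_sum, ← Finset.mul_sum, h.2.2, ← key y v]
    congr 2
    simp

lemma planCost_mix [Fintype V] (G : SimpleGraph V) (x y : V) (l : ℝ) (π : V → V → ℝ) :
    planCost G (fun u v => l * π u v
        + (1 - l) * (if u = x then if v = y then 1 else 0 else 0))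
      = l * planCost G π + (1 - l) * G.dist x y := by
  have h : ∀ u v, (G.dist u v : ℝ) * (l * π u v
        + (1 - l) * (if u = x then if v = y then 1 else 0 else 0))
      = l * (G.dist u v * π u v)
        + (if u = x then if v = y then (1 - l) * G.dist u v else 0 else 0) := by
    intro u v
    split_ifs <;> ring
  unfold planCost
  simp_rw [h, Finset.sum_add_distrib, ← Finset.mul_sum]
  congr 1
  rw [Finset.sum_eq_single x]
  · simp
  · intro b _ hb; simp [hb]
  · simp

/-- One direction of the dual formula for the curvature of an edge. The quotient in
the definition is monotone in `p` on `(0, 1)`, because mixing with a point mass shows that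
`W` is convex, and it is bounded by weak duality. Hence the limit exists (so that
`limUnder` is not a junk value) and inherits the bound. -/
lemma kappaLLY_le [Fintype V] (G : SimpleGraph V) (hconn : G.Connected) (f : V → ℝ)
    (hf : ∀ u v, G.Adj u v → f v - f u ≤ 1) {x y : V} (hxy : G.Adj x y) (h1 : f y - f x = 1) :
    kappaLLY G x y ≤ lap G f x - lap G f y := by
  have hdx : 0 < G.degree x := (G.degree_pos_iff_exists_adj x).2 ⟨y, hxy⟩
  have hdy : 0 < G.degree y := (G.degree_pos_iff_exists_adj y).2 ⟨x, hxy.symm⟩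
  have hd : G.dist x y = 1 := SimpleGraph.dist_eq_one_iff_adj.2 hxy
  set F : ℝ → ℝ := fun p => (1 - Wdist G (muP G p x) (muP G p y) / (G.dist x y)) / (1 - p)
    with hF
  have hne : ∀ p ∈ Set.Ioo (0 : ℝ) 1,
      {c : ℝ | ∃ π, IsTransportPlan (muP G p x) (muP G p y) π ∧ c = planCost G π}.Nonempty := by
    intro p hp
    obtain ⟨π, hπ⟩ := exists_isTransportPlan (muP G p x) (muP G p y)
      (muP_nonneg G p hp.1.le hp.2.le x) (muP_nonneg G p hp.1.le hp.2.le y)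
      (sum_muP G p x hdx) (sum_muP G p y hdy)
    exact ⟨_, π, hπ, rfl⟩
  have hbd : ∀ p ∈ Set.Ioo (0 : ℝ) 1, F p ≤ lap G f x - lap G f y := by
    intro p hp
    have hp' : 0 < 1 - p := by linarith [hp.2]
    have hW : 1 + (1 - p) * (lap G f y - lap G f x) ≤ Wdist G (muP G p x) (muP G p y) := by
      refine le_csInf (hne p hp) ?_
      rintro c ⟨π, hπ, rfl⟩
      have := sub_le_planCost G hconn f hf hπ
      rw [sum_mul_muP G f p x hdx, sum_mul_muP G f p y hdy] at this
      linarith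
    simp only [hF, hd, Nat.cast_one, div_one]
    rw [div_le_iff₀ hp']
    linarith
  have hmono : MonotoneOn F (Set.Ioo (0 : ℝ) 1) := by
    intro p hp q hq hpq
    have hp' : 0 < 1 - p := by linarith [hp.2]
    have hq' : 0 < 1 - q := by linarith [hq.2]
    have hl : 0 < (1 - q) / (1 - p) := div_pos hq' hp'
    have hle : (Wdist G (muP G q x) (muP G q y) - (1 - (1 - q) / (1 - p))) / ((1 - q) / (1 - p))
        ≤ Wdist G (muP G p x) (muP G p y) := by
      refine le_csInf (hne p hp) ?_
      rintro c ⟨π, hπ, rfl⟩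
      rw [div_le_iff₀ hl]
      have : Wdist G (muP G q x) (muP G q y) ≤ _ :=
        csInf_le (bddBelow_planCost G _ _)
          ⟨_, isTransportPlan_mix G hp.2 hpq hq.2 hπ, rfl⟩
      rw [planCost_mix, hd] at this
      push_cast at this
      linarith
    simp only [hF, hd, Nat.cast_one, div_one]
    rw [div_le_iff₀ hl] at hle
    rw [div_le_div_iff₀ hp' hq']
    have e : (1 - q) / (1 - p) * (1 - p) = 1 - q := div_mul_cancel₀ _ hp'.ne'
    generalize (1 - q) / (1 - p) = l at *
    rw [← e]
    nlinarith [mul_le_mul_of_nonneg_right hle hp'.le]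
  have hlim := MonotoneOn.tendsto_nhdsWithin_Ioo_left (Set.nonempty_Ioo.2 one_pos) hmono
    ⟨lap G f x - lap G f y, by rintro _ ⟨p, hp, rfl⟩; exact hbd p hp⟩
  have hk : kappaLLY G x y = sSup (F '' Set.Ioo 0 1) := hlim.limUnder_eq
  rw [hk]
  refine csSup_le ((Set.nonempty_Ioo.2 one_pos).image F) ?_
  rintro _ ⟨p, hp, rfl⟩
  exact hbd p hp

/-! ### Cuts and their boundaries -/

/-- The number of neighbours of `v` outside `X`. -/
noncomputable def outDeg [Fintype V] (G : SimpleGraph V) (X : Finset V) (v : V) : ℕ :=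
  (G.neighborFinset v \ X).card

/-- The inner vertex boundary: vertices of `X` with a neighbour outside `X`. -/
noncomputable def bdry [Fintype V] (G : SimpleGraph V) (X : Finset V) : Finset V :=
  X.filter fun v => ∃ w, w ∉ X ∧ G.Adj v w

/-- The number of edges between `X` and its complement. -/
noncomputable def cutSize [Fintype V] (G : SimpleGraph V) (X : Finset V) : ℕ :=
  ∑ v ∈ X, outDeg G X v

/-- The value at `v ∈ bdry G X` of the Laplacian of the signed distance to the cut, seen from
the side of `X`: neighbours across the cut contribute `1`, those in the boundary `0`, and the
remaining ones `-1`. -/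
noncomputable def gain [Fintype V] (G : SimpleGraph V) (X : Finset V) (v : V) : ℝ :=
  (2 * outDeg G X v + (G.neighborFinset v ∩ bdry G X).card : ℝ) / G.degree v - 1

lemma mem_bdry [Fintype V] {G : SimpleGraph V} {X : Finset V} {v : V} :
    v ∈ bdry G X ↔ v ∈ X ∧ ∃ w, w ∉ X ∧ G.Adj v w := by
  simp [bdry]

lemma outDeg_pos [Fintype V] {G : SimpleGraph V} {X : Finset V} {v : V} (hv : v ∈ bdry G X) :
    1 ≤ outDeg G X v := by
  obtain ⟨_, w, hw, h⟩ := mem_bdry.1 hv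
  exact Finset.card_pos.2 ⟨w, by simp [h, hw]⟩

lemma cutSize_eq_sum_bdry [Fintype V] (G : SimpleGraph V) (X : Finset V) :
    cutSize G X = ∑ v ∈ bdry G X, outDeg G X v := by
  refine (Finset.sum_subset (Finset.filter_subset _ _) fun v hv hn => ?_).symm
  rw [outDeg, Finset.card_eq_zero, Finset.sdiff_eq_empty_iff_subset]
  intro w hw
  by_contra hwX
  exact hn (mem_bdry.2 ⟨hv, w, hwX, by simpa using hw⟩)

lemma cutSize_compl [Fintype V] (G : SimpleGraph V) (X : Finset V) :
    cutSize G Xᶜ = cutSize G X := by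
  have h := Finset.sum_card_bipartiteAbove_eq_sum_card_bipartiteBelow G.Adj (s := X) (t := Xᶜ)
  unfold cutSize outDeg
  symm
  convert h using 3 with v hv v hv
  · ext w; simp [Finset.bipartiteAbove, and_comm]
  · ext w; simp [Finset.bipartiteBelow, and_comm, G.adj_comm]

lemma outDeg_add_card_le [Fintype V] {G : SimpleGraph V} {X : Finset V} {x : V}
    (hx : x ∈ bdry G X) : outDeg G X x + (bdry G X).card ≤ cutSize G X + 1 := by
  rw [cutSize_eq_sum_bdry, ← Finset.add_sum_erase _ _ hx]
  have h1 : ((bdry G X).erase x).card • 1 ≤ ∑ v ∈ (bdry G X).erase x, outDeg G X v :=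
    Finset.card_nsmul_le_sum _ _ _ fun v hv => outDeg_pos (Finset.mem_of_mem_erase hv)
  have := Finset.card_erase_add_one hx
  simp only [smul_eq_mul, mul_one] at h1
  omega

lemma outDeg_add_outDeg_add_card_le [Fintype V] {G : SimpleGraph V} {X : Finset V} {x₁ x₂ : V}
    (h₁ : x₁ ∈ bdry G X) (h₂ : x₂ ∈ bdry G X) (hne : x₁ ≠ x₂) :
    outDeg G X x₁ + outDeg G X x₂ + (bdry G X).card ≤ cutSize G X + 2 := by
  have h₂' : x₂ ∈ (bdry G X).erase x₁ := Finset.mem_erase.2 ⟨hne.symm, h₂⟩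
  rw [cutSize_eq_sum_bdry, ← Finset.add_sum_erase _ _ h₁, ← Finset.add_sum_erase _ _ h₂']
  have h3 : (((bdry G X).erase x₁).erase x₂).card • 1
      ≤ ∑ v ∈ ((bdry G X).erase x₁).erase x₂, outDeg G X v :=
    Finset.card_nsmul_le_sum _ _ _ fun v hv =>
      outDeg_pos (Finset.mem_of_mem_erase (Finset.mem_of_mem_erase hv))
  have := Finset.card_erase_add_one h₁
  have := Finset.card_erase_add_one h₂'
  simp only [smul_eq_mul, mul_one] at h3
  omega

lemma card_inter_bdry_lt [Fintype V] {G : SimpleGraph V} {X : Finset V} {x : V}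
    (hx : x ∈ bdry G X) : (G.neighborFinset x ∩ bdry G X).card + 1 ≤ (bdry G X).card := by
  rw [← Finset.card_erase_add_one hx]
  refine Nat.add_le_add_right (Finset.card_le_card fun z hz => ?_) 1
  rw [Finset.mem_inter, SimpleGraph.mem_neighborFinset] at hz
  exact Finset.mem_erase.2 ⟨hz.1.ne', hz.2⟩

/-! ### The signed distance to the cut as a test function -/

/-- The signed distance to the cut, truncated to the values `-1, 0, 1, 2`: on `X` it is `0` on
the boundary and `-1` elsewhere, on the complement `1` on the boundary and `2` elsewhere. -/
noncomputable def cutFun [Fintype V] (G : SimpleGraph V) (X : Finset V) (v : V) : ℝ :=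
  if v ∈ X then (if v ∈ bdry G X then 0 else -1) else (if v ∈ bdry G Xᶜ then 1 else 2)

lemma cutFun_sub_le [Fintype V] (G : SimpleGraph V) (X : Finset V) (u v : V) (h : G.Adj u v) :
    cutFun G X v - cutFun G X u ≤ 1 := by
  have h1 : u ∈ X → v ∉ X → u ∈ bdry G X ∧ v ∈ bdry G Xᶜ := fun hu hv =>
    ⟨mem_bdry.2 ⟨hu, v, hv, h⟩, mem_bdry.2 ⟨by simpa using hv, u, by simpa using hu, h.symm⟩⟩
  unfold cutFun
  by_cases hu : u ∈ X <;> by_cases hv : v ∈ X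
  · simp only [hu, hv, if_true]; split_ifs <;> norm_num
  · simp [hu, hv, h1 hu hv]
  · simp only [hu, hv, if_true, if_false]; split_ifs <;> norm_num
  · simp only [hu, hv, if_false]; split_ifs <;> norm_num

lemma gain_eq [Fintype V] (G : SimpleGraph V) (X : Finset V) (v : V) (hv : v ∈ bdry G X) :
    gain G X v = (∑ z ∈ G.neighborFinset v,
      (2 * (if z ∉ X then 1 else 0) + (if z ∈ bdry G X then 1 else 0) - 1 : ℝ))
        / G.degree v := by
  obtain ⟨_, w, _, hw⟩ := mem_bdry.1 hv
  have hd : (G.degree v : ℝ) ≠ 0 := by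
    exact_mod_cast ((G.degree_pos_iff_exists_adj v).2 ⟨w, hw⟩).ne'
  rw [gain, Finset.sum_sub_distrib, Finset.sum_add_distrib, ← Finset.mul_sum, Finset.sum_boole,
    Finset.sum_boole, Finset.sum_const, SimpleGraph.card_neighborFinset_eq_degree,
    Finset.filter_mem_eq_inter, Finset.filter_notMem_eq_sdiff, outDeg]
  field_simp
  simp

lemma gain_add_gain_pos [Fintype V] (G : SimpleGraph V) (hconn : G.Connected)
    (hpos : ∀ x y : V, G.Adj x y → 0 < kappaLLY G x y) (X : Finset V) {x y : V}
    (hx : x ∈ X) (hy : y ∉ X) (hxy : G.Adj x y) : 0 < gain G X x + gain G Xᶜ y := by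
  have hbx : x ∈ bdry G X := mem_bdry.2 ⟨hx, y, hy, hxy⟩
  have hby : y ∈ bdry G Xᶜ := mem_bdry.2 ⟨by simpa using hy, x, by simpa using hx, hxy.symm⟩
  have fx : cutFun G X x = 0 := by simp [cutFun, hx, hbx]
  have fy : cutFun G X y = 1 := by simp [cutFun, hy, hby]
  have ex : lap G (cutFun G X) x = gain G X x := by
    rw [gain_eq G X x hbx, lap]
    congr 1
    refine Finset.sum_congr rfl fun z hz => ?_
    rw [SimpleGraph.mem_neighborFinset] at hz
    rw [fx, cutFun]
    by_cases hzX : z ∈ X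
    · by_cases hzb : z ∈ bdry G X <;> simp [hzX, hzb]
    · have h1 : z ∈ bdry G Xᶜ :=
        mem_bdry.2 ⟨by simpa using hzX, x, by simpa using hx, hz.symm⟩
      have h2 : z ∉ bdry G X := fun h => hzX (mem_bdry.1 h).1
      simp only [hzX, h1, h2, if_true, if_false, not_false_eq_true]
      norm_num
  have ey : lap G (cutFun G X) y = -gain G Xᶜ y := by
    rw [gain_eq G Xᶜ y hby, lap, ← neg_div, ← Finset.sum_neg_distrib]
    congr 1
    refine Finset.sum_congr rfl fun z hz => ?_
    rw [SimpleGraph.mem_neighborFinset] at hz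
    rw [fy, cutFun]
    by_cases hzX : z ∈ X
    · have h1 : z ∈ bdry G X := mem_bdry.2 ⟨hzX, y, hy, hz.symm⟩
      have h2 : z ∉ bdry G Xᶜ := fun h => by simpa [hzX] using (mem_bdry.1 h).1
      simp only [hzX, h1, h2, if_true, if_false, Finset.mem_compl, not_true_eq_false,
        not_false_eq_true]
      norm_num
    · by_cases hzb : z ∈ bdry G Xᶜ
      · simp [hzX, hzb]
      · simp only [hzX, hzb, if_false, Finset.mem_compl, not_true_eq_false,
          not_false_eq_true]
        norm_num
  have hk := kappaLLY_le G hconn (cutFun G X) (cutFun_sub_le G X) hxy (by rw [fx, fy]; ring)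
  rw [ex, ey] at hk
  linarith [hpos x y hxy]

/-! ### A minimum cut smaller than the minimum degree is impossible -/

lemma minDegree_mul_gain_le [Fintype V] (G : SimpleGraph V) (hδ : 0 < G.minDegree) (X : Finset V)
    {x : V} (hx : x ∈ bdry G X) :
    G.minDegree * gain G X x
      ≤ 2 * outDeg G X x + (bdry G X).card - 1 - G.minDegree := by
  have h1 : ((G.neighborFinset x ∩ bdry G X).card : ℝ) + 1 ≤ (bdry G X).card := by
    exact_mod_cast card_inter_bdry_lt hx
  have h2 : (G.minDegree : ℝ) ≤ G.degree x := by exact_mod_cast G.minDegree_le_degree x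
  have h0 : (0 : ℝ) < G.minDegree := by exact_mod_cast hδ
  have h3 : (2 * outDeg G X x + (G.neighborFinset x ∩ bdry G X).card : ℝ) / G.degree x
      ≤ (2 * outDeg G X x + (G.neighborFinset x ∩ bdry G X).card : ℝ) / G.minDegree :=
    div_le_div_of_nonneg_left (by positivity) h0 h2
  rw [le_div_iff₀ h0] at h3
  unfold gain
  linarith

/-- Two distinct boundary vertices on the same side have nonpositive total gain. -/
lemma gain_add_gain_nonpos [Fintype V] (G : SimpleGraph V) (X : Finset V)
    (hc : cutSize G X < G.minDegree) {x₁ x₂ : V} (h₁ : x₁ ∈ bdry G X) (h₂ : x₂ ∈ bdry G X)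
    (hne : x₁ ≠ x₂) : gain G X x₁ + gain G X x₂ ≤ 0 := by
  have hδ : 0 < G.minDegree := by omega
  have e1 := minDegree_mul_gain_le G hδ X h₁
  have e2 := minDegree_mul_gain_le G hδ X h₂
  have e3 : (outDeg G X x₁ + outDeg G X x₂ + (bdry G X).card + 1 : ℝ) ≤ G.minDegree + 2 := by
    have := outDeg_add_outDeg_add_card_le h₁ h₂ hne
    exact_mod_cast (by omega :
      outDeg G X x₁ + outDeg G X x₂ + (bdry G X).card + 1 ≤ G.minDegree + 2)
  have h0 : (0 : ℝ) < G.minDegree := by exact_mod_cast hδ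
  by_contra! h
  nlinarith [mul_pos h0 h]

/-- No two cut edges are disjoint. -/
lemma not_disjoint_cut_edges [Fintype V] (G : SimpleGraph V) (hconn : G.Connected)
    (hpos : ∀ x y : V, G.Adj x y → 0 < kappaLLY G x y) (X : Finset V)
    (hc : cutSize G X < G.minDegree) {x₁ x₂ y₁ y₂ : V} (hx₁ : x₁ ∈ X) (hx₂ : x₂ ∈ X)
    (hy₁ : y₁ ∉ X) (hy₂ : y₂ ∉ X) (h₁ : G.Adj x₁ y₁) (h₂ : G.Adj x₂ y₂) (hx : x₁ ≠ x₂) :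
    y₁ = y₂ := by
  by_contra hy
  have p1 := gain_add_gain_pos G hconn hpos X hx₁ hy₁ h₁
  have p2 := gain_add_gain_pos G hconn hpos X hx₂ hy₂ h₂
  have n1 := gain_add_gain_nonpos G X hc (mem_bdry.2 ⟨hx₁, _, hy₁, h₁⟩)
    (mem_bdry.2 ⟨hx₂, _, hy₂, h₂⟩) hx
  have n2 := gain_add_gain_nonpos G Xᶜ (by rwa [cutSize_compl])
    (mem_bdry.2 ⟨by simpa using hy₁, x₁, by simpa using hx₁, h₁.symm⟩)
    (mem_bdry.2 ⟨by simpa using hy₂, x₂, by simpa using hx₂, h₂.symm⟩) hy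
  linarith

/-- A minimum cut smaller than the minimum degree is not a star: moving the center `x` of the
star to the other side replaces the cut by the remaining edges at `x`, so by minimality at most
half of the edges at `x` cross the cut. -/
lemma bdry_ne_singleton [Fintype V] (G : SimpleGraph V) (hconn : G.Connected)
    (hpos : ∀ x y : V, G.Adj x y → 0 < kappaLLY G x y) (X : Finset V)
    (hc : cutSize G X < G.minDegree)
    (hmin : ∀ Z : Finset V, Z.Nonempty → Zᶜ.Nonempty → cutSize G X ≤ cutSize G Z) (x : V) :
    bdry G X ≠ {x} := by
  intro hb
  have hbx : x ∈ bdry G X := by simp [hb]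
  obtain ⟨hx, y, hy, hxy⟩ := mem_bdry.1 hbx
  have hby : y ∈ bdry G Xᶜ := mem_bdry.2 ⟨by simpa using hy, x, by simpa using hx, hxy.symm⟩
  have hout : cutSize G X = outDeg G X x := by
    rw [cutSize_eq_sum_bdry, hb, Finset.sum_singleton]
  have hsplit : outDeg G X x + (G.neighborFinset x ∩ X).card = G.degree x := by
    rw [outDeg, Finset.card_sdiff_add_card_inter, SimpleGraph.card_neighborFinset_eq_degree]
  have hdx := G.minDegree_le_degree x
  have hdy := G.minDegree_le_degree y
  have hcut : cutSize G (X.erase x) ≤ (G.neighborFinset x ∩ X).card := by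
    have h1 : ∀ v ∈ X.erase x, outDeg G (X.erase x) v ≤ if v ∈ G.neighborFinset x then 1 else 0 := by
      intro v hv
      obtain ⟨hvx, hvX⟩ := Finset.mem_erase.1 hv
      have h2 : G.neighborFinset v \ X.erase x ⊆ if v ∈ G.neighborFinset x then {x} else ∅ := by
        intro w hw
        rw [Finset.mem_sdiff, SimpleGraph.mem_neighborFinset] at hw
        have hwx : w = x := by
          by_contra hwx
          have hwX : w ∉ X := fun h => hw.2 (Finset.mem_erase.2 ⟨hwx, h⟩)
          have : v ∈ bdry G X := mem_bdry.2 ⟨hvX, w, hwX, hw.1⟩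
          rw [hb, Finset.mem_singleton] at this
          exact hvx this
        subst hwx
        simp [hw.1.symm]
      refine (Finset.card_le_card h2).trans ?_
      split_ifs <;> simp
    refine (Finset.sum_le_sum h1).trans ?_
    rw [Finset.sum_boole, Nat.cast_id]
    refine Finset.card_le_card fun v hv => ?_
    rw [Finset.mem_filter] at hv
    exact Finset.mem_inter.2 ⟨hv.2, Finset.mem_of_mem_erase hv.1⟩
  have hne : (X.erase x).Nonempty := by
    obtain ⟨z, hz⟩ := Finset.card_pos.1 (by omega : 0 < (G.neighborFinset x ∩ X).card)
    rw [Finset.mem_inter, SimpleGraph.mem_neighborFinset] at hz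
    exact ⟨z, Finset.mem_erase.2 ⟨hz.1.ne', hz.2⟩⟩
  have hm := hmin (X.erase x) hne ⟨x, by simp⟩
  have hgx : gain G X x ≤ 0 := by
    have h0 : (G.neighborFinset x ∩ bdry G X).card = 0 := by
      have := card_inter_bdry_lt hbx
      rw [hb, Finset.card_singleton] at this
      rw [hb]; omega
    rw [gain, h0, sub_nonpos]
    refine div_le_one_of_le₀ ?_ (Nat.cast_nonneg _)
    exact_mod_cast (by omega : 2 * outDeg G X x + 0 ≤ G.degree x)
  have hgy : gain G Xᶜ y ≤ 0 := by
    have h1 : outDeg G Xᶜ y ≤ 1 := by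
      rw [outDeg, ← Finset.card_singleton x]
      refine Finset.card_le_card fun w hw => ?_
      rw [Finset.mem_sdiff, SimpleGraph.mem_neighborFinset, Finset.mem_compl, not_not] at hw
      rw [← hb]
      exact mem_bdry.2 ⟨hw.2, y, hy, hw.1.symm⟩
    have h2 := card_inter_bdry_lt hby
    have h3 := outDeg_add_card_le hby
    rw [cutSize_compl] at h3
    rw [gain, sub_nonpos]
    refine div_le_one_of_le₀ ?_ (Nat.cast_nonneg _)
    exact_mod_cast (by omega :
      2 * outDeg G Xᶜ y + (G.neighborFinset y ∩ bdry G Xᶜ).card ≤ G.degree y)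
  linarith [gain_add_gain_pos G hconn hpos X hx hy hxy]

lemma minDegree_le_cutSize [Fintype V] (G : SimpleGraph V) (hconn : G.Connected)
    (hpos : ∀ x y : V, G.Adj x y → 0 < kappaLLY G x y) (X : Finset V)
    (hX : X.Nonempty) (hX' : Xᶜ.Nonempty)
    (hmin : ∀ Z : Finset V, Z.Nonempty → Zᶜ.Nonempty → cutSize G X ≤ cutSize G Z) :
    G.minDegree ≤ cutSize G X := by
  by_contra! hc
  obtain ⟨x₁, hx₁, y₁, hy₁, h₁⟩ : ∃ x ∈ X, ∃ y, y ∉ X ∧ G.Adj x y := by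
    obtain ⟨a, ha⟩ := hX
    obtain ⟨b, hb⟩ := hX'
    obtain ⟨p⟩ := hconn.preconnected a b
    obtain ⟨d, -, hd1, hd2⟩ := p.exists_boundary_dart (X : Set V) ha (by simpa using hb)
    exact ⟨d.fst, hd1, d.snd, hd2, d.adj⟩
  have hbx₁ : x₁ ∈ bdry G X := mem_bdry.2 ⟨hx₁, y₁, hy₁, h₁⟩
  have hby₁ : y₁ ∈ bdry G Xᶜ :=
    mem_bdry.2 ⟨by simpa using hy₁, x₁, by simpa using hx₁, h₁.symm⟩
  have nx := bdry_ne_singleton G hconn hpos X hc hmin x₁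
  have ny := bdry_ne_singleton G hconn hpos Xᶜ (by rwa [cutSize_compl])
    (by rwa [cutSize_compl]) y₁
  -- Both boundaries have a second vertex, so the cut edges do not form a star.
  obtain ⟨x₂, hbx₂, hx₂₁⟩ : ∃ x ∈ bdry G X, x ≠ x₁ := by
    by_contra! h
    exact nx (Finset.eq_singleton_iff_unique_mem.2 ⟨hbx₁, h⟩)
  obtain ⟨y₃, hby₃, hy₃₁⟩ : ∃ y ∈ bdry G Xᶜ, y ≠ y₁ := by
    by_contra! h
    exact ny (Finset.eq_singleton_iff_unique_mem.2 ⟨hby₁, h⟩)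
  obtain ⟨hx₂, y₂, hy₂, h₂⟩ := mem_bdry.1 hbx₂
  obtain ⟨hy₃, x₃, hx₃, h₃⟩ := mem_bdry.1 hby₃
  rw [Finset.mem_compl] at hy₃
  rw [Finset.mem_compl, not_not] at hx₃
  have key : ∀ {a b c d : V}, a ∈ X → b ∈ X → c ∉ X → d ∉ X → G.Adj a c → G.Adj b d →
      a ≠ b → c = d := fun ha hb hc' hd h h' hab =>
    not_disjoint_cut_edges G hconn hpos X hc ha hb hc' hd h h' hab
  have e₁ := key hx₁ hx₂ hy₁ hy₂ h₁ h₂ hx₂₁.symm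
  by_cases h : x₃ = x₁
  · subst h
    exact hy₃₁ ((key hx₂ hx₃ hy₂ hy₃ h₂ h₃.symm hx₂₁).symm.trans e₁.symm)
  · exact hy₃₁ (key hx₃ hx₁ hy₃ hy₁ h₃.symm h₁ h)

/-! ### Edge-connectivity as the minimum cut size -/

lemma edgeConnectivity_le_cutSize [Fintype V] (G : SimpleGraph V) (X : Finset V)
    (hX : X.Nonempty) (hX' : Xᶜ.Nonempty) : edgeConnectivity G ≤ cutSize G X := by
  set P : Finset (V × V) := X.biUnion fun v => (G.neighborFinset v \ X).image fun w => (v, w)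
    with hP
  have hmem : ∀ u v, (u, v) ∈ P ↔ u ∈ X ∧ G.Adj u v ∧ v ∉ X := by
    intro u v
    simp [hP]
  set F : Finset (Sym2 V) := P.image fun e => s(e.1, e.2) with hF
  have hcard : F.card ≤ cutSize G X := by
    refine Finset.card_image_le.trans (Finset.card_biUnion_le.trans ?_)
    exact Finset.sum_le_sum fun v _ => Finset.card_image_le
  refine le_trans (Nat.sInf_le ⟨F, rfl, ?_, ?_⟩) hcard
  · intro e he
    obtain ⟨⟨u, v⟩, huv, rfl⟩ := Finset.mem_image.1 (Finset.mem_coe.1 he)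
    exact ((hmem u v).1 huv).2.1
  · intro hcon
    obtain ⟨a, ha⟩ := hX
    obtain ⟨b, hb⟩ := hX'
    obtain ⟨p⟩ := hcon.preconnected a b
    obtain ⟨d, -, hd1, hd2⟩ := p.exists_boundary_dart (X : Set V) ha (by simpa using hb)
    have hd := SimpleGraph.deleteEdges_adj.1 d.adj
    exact hd.2 (Finset.mem_coe.2 (Finset.mem_image.2
      ⟨(d.fst, d.snd), (hmem _ _).2 ⟨hd1, hd.1, hd2⟩, rfl⟩))

lemma exists_cutSize_le_edgeConnectivity [Fintype V] (G : SimpleGraph V)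
    (hcard : 2 ≤ Fintype.card V) :
    ∃ X : Finset V, X.Nonempty ∧ Xᶜ.Nonempty ∧ cutSize G X ≤ edgeConnectivity G := by
  have hnt : Nontrivial V := Fintype.one_lt_card_iff_nontrivial.1 hcard
  -- Deleting all edges disconnects the graph, so the infimum is attained.
  have hne : {n : ℕ | ∃ F : Finset (Sym2 V), F.card = n ∧ (F : Set (Sym2 V)) ⊆ G.edgeSet ∧
      ¬ (G.deleteEdges (F : Set (Sym2 V))).Connected}.Nonempty := by
    refine ⟨_, G.edgeFinset, rfl, by simp, ?_⟩
    intro h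
    obtain ⟨a⟩ := h.nonempty
    obtain ⟨w, hw⟩ := h.preconnected.exists_adj_of_nontrivial a
    simp at hw
  obtain ⟨F, hF, -, hdis⟩ := Nat.sInf_mem hne
  have hF' : F.card = edgeConnectivity G := hF
  have hnp : ¬ (G.deleteEdges (F : Set (Sym2 V))).Preconnected := fun h =>
    hdis ((SimpleGraph.connected_iff _).2 ⟨h, inferInstance⟩)
  obtain ⟨a, b, hab⟩ : ∃ a b, ¬ (G.deleteEdges (F : Set (Sym2 V))).Reachable a b := by
    by_contra! h
    exact hnp h
  set X : Finset V := Finset.univ.filter fun v =>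
    (G.deleteEdges (F : Set (Sym2 V))).Reachable a v with hX
  have hXm : ∀ v, v ∈ X ↔ (G.deleteEdges (F : Set (Sym2 V))).Reachable a v := by simp [hX]
  refine ⟨X, ⟨a, (hXm a).2 (SimpleGraph.Reachable.refl a)⟩, ⟨b, by simp [hXm, hab]⟩, ?_⟩
  rw [← hF']
  have hs : cutSize G X = (X.sigma fun v => G.neighborFinset v \ X).card :=
    (Finset.card_sigma _ _).symm
  rw [hs]
  refine Finset.card_le_card_of_injOn (fun e => s(e.1, e.2)) ?_ ?_
  · rintro ⟨u, v⟩ he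
    simp only [Finset.coe_sigma, Set.mem_sigma_iff, Finset.mem_coe, Finset.mem_sdiff,
      SimpleGraph.mem_neighborFinset] at he
    by_contra hn
    refine he.2.2 ((hXm v).2 (((hXm u).1 he.1).trans (SimpleGraph.Adj.reachable ?_)))
    exact SimpleGraph.deleteEdges_adj.2 ⟨he.2.1, hn⟩
  · rintro ⟨u, v⟩ he ⟨u', v'⟩ he' h
    simp only [Finset.coe_sigma, Set.mem_sigma_iff, Finset.mem_coe, Finset.mem_sdiff,
      SimpleGraph.mem_neighborFinset] at he he'
    rcases Sym2.eq_iff.1 h with ⟨h1, h2⟩ | ⟨h1, h2⟩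
    · simp only at h1 h2
      subst h1; subst h2; rfl
    · simp only at h1 h2
      subst h1
      exact absurd he.1 he'.2.2

/-- A finite connected simple graph (with at least two vertices) with positive
Lin-Lu-Yau curvature on every edge has `k'(G) = δ(G)`. -/
theorem edgeConnectivity_eq_minDegree_of_pos_curvature
    {V : Type*} [Fintype V] (G : SimpleGraph V)
    (hconn : G.Connected) (hcard : 2 ≤ Fintype.card V)
    (hpos : ∀ x y : V, G.Adj x y → 0 < kappaLLY G x y) :
    edgeConnectivity G = G.minDegree := by
  obtain ⟨X, hX, hX', hle⟩ := exists_cutSize_le_edgeConnectivity G hcard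
  have hnt : Nontrivial V := Fintype.one_lt_card_iff_nontrivial.1 hcard
  refine le_antisymm ?_ (le_trans ?_ hle)
  · obtain ⟨v, hv⟩ := G.exists_minimal_degree_vertex
    obtain ⟨w, hw⟩ := exists_ne v
    have h := edgeConnectivity_le_cutSize G {v} (by simp) ⟨w, by simpa using hw⟩
    rw [cutSize, Finset.sum_singleton] at h
    rw [hv, ← SimpleGraph.card_neighborFinset_eq_degree]
    exact h.trans (Finset.card_le_card Finset.sdiff_subset)
  · exact minDegree_le_cutSize G hconn hpos X hX hX' fun Z hZ hZ' =>
      hle.trans (edgeConnectivity_le_cutSize G Z hZ hZ')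
end

section
/- Let G be a finite connected amply regular graph with parameters (d,α,β) such that β ≥ α and β ≠ 1. Then the edge-connectivity of G satisfies k'(G) = d. -/
/-!
Let `S` be a side of an edge cut and `xy` an edge with `x ∈ S`, `y ∉ S`. It is enough to find `d`
distinct edges of `G` leaving `S`.

Put `L = N(x) \ {y}` and `R = N(y) \ {x}`. A vertex `u ∈ L` has `β - 1` neighbours in `R` if it is
not adjacent to `y`, and `α - 1` otherwise; in the latter case `u` also lies in `R`. Hence the
bipartite multigraph on `L ⊔ R` formed by the adjacencies of `G`, together with `β - α` parallel
edges joining the two copies of every common neighbour of `x` and `y`, is `(β - 1)`-regular, and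
Hall's theorem gives an injection `f : L → R` with `f u = u` or `f u ~ u`
(`exists_matching`). When `β = 0` the set `L` is empty.

Besides the edge `xy` this yields `d - 1` walks `x, u, f u, y`, each of which leaves `S`, and the
first edges along which they leave `S` are pairwise distinct (`degree_le_of_cut`). The opposite
inequality is obtained by deleting all edges at one vertex.
-/

open Filter Finset

attribute [local instance] Classical.propDecidable

variable {V : Type*}

open SimpleGraph

lemma dist_eq_two_of_common {V : Type*} {G : SimpleGraph V} {u x y : V}
    (hux : G.Adj u x) (hxy : G.Adj x y) (hne : u ≠ y) (hn : ¬ G.Adj u y) : G.dist u y = 2 := by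
  have h2 : G.dist u y ≤ 2 := G.dist_le (Walk.cons hux (Walk.cons hxy Walk.nil))
  have hr : G.Reachable u y := hux.reachable.trans hxy.reachable
  have h0 := hr.pos_dist_of_ne hne
  have h1 : G.dist u y ≠ 1 := fun h => hn (dist_eq_one_iff_adj.1 h)
  omega

/-- Multiplicity of the edge `uv` in the auxiliary bipartite multigraph: adjacencies count once,
and `k` parallel edges join the two copies of a vertex. -/
noncomputable def matchWeight {V : Type*} (G : SimpleGraph V) (k : ℕ) (u v : V) : ℕ :=
  (if G.Adj u v then 1 else 0) + (if u = v then k else 0)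

lemma matchWeight_comm {V : Type*} (G : SimpleGraph V) (k : ℕ) (u v : V) :
    matchWeight G k u v = matchWeight G k v u := by
  simp only [matchWeight, G.adj_comm u v, eq_comm (a := u)]

/-- The auxiliary multigraph is `(β - 1)`-regular. -/
lemma sum_matchWeight {V : Type*} [Fintype V] {G : SimpleGraph V} {d α β : ℕ}
    (har : IsAmplyRegular G d α β) (hba : α ≤ β) {x y u : V} (hxy : G.Adj x y)
    (hu : u ∈ (G.neighborFinset x).erase y) :
    ∑ v ∈ (G.neighborFinset y).erase x, matchWeight G (β - α) u v = β - 1 := by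
  obtain ⟨-, hα, hβ⟩ := har
  rw [mem_erase, mem_neighborFinset] at hu
  obtain ⟨huy, hxu⟩ := hu
  have hcard : (((G.neighborFinset y).erase x).filter (G.Adj u)).card
      = (G.neighborFinset u ∩ G.neighborFinset y).card - 1 := by
    rw [← card_erase_of_mem (a := x)]
    · congr 1
      ext v
      simp only [mem_filter, mem_erase, mem_inter, mem_neighborFinset]
      tauto
    · simp [hxu.symm, hxy.symm]
  have hmem : u ∈ (G.neighborFinset y).erase x ↔ G.Adj u y := by
    simp [hxu.ne', G.adj_comm u y]
  simp only [matchWeight, sum_add_distrib, sum_ite_eq, ← card_filter]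
  rw [hcard]
  by_cases h : G.Adj u y
  · have hpos : 0 < α := by
      rw [← hα u y h]
      exact card_pos.2 ⟨x, by simp [hxu.symm, hxy.symm]⟩
    rw [hα u y h, if_pos (hmem.2 h)]
    omega
  · rw [hβ u y (dist_eq_two_of_common hxu.symm hxy huy h), if_neg (fun h' => h (hmem.1 h'))]
    omega

/-- For an edge `xy`, the neighbours of `x` other than `y` inject into the neighbours of `y` other
than `x`, each moving along an edge or staying in place. -/
lemma exists_matching {V : Type*} [Fintype V] {G : SimpleGraph V} {d α β : ℕ}
    (har : IsAmplyRegular G d α β) (hba : α ≤ β) (hb1 : β ≠ 1) {x y : V} (hxy : G.Adj x y) :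
    ∃ f : V → V, Set.InjOn f ((G.neighborFinset x).erase y : Finset V) ∧
      ∀ u ∈ (G.neighborFinset x).erase y,
        f u ∈ (G.neighborFinset y).erase x ∧ (u = f u ∨ G.Adj u (f u)) := by
  obtain rfl | hβ : β = 0 ∨ 2 ≤ β := by omega
  · -- A vertex of `L` and `y` have the common neighbour `x`, which contradicts `α = β = 0`.
    have hempty : ∀ u, u ∉ (G.neighborFinset x).erase y := by
      intro u hu
      rw [mem_erase, mem_neighborFinset] at hu
      have hpos : 0 < (G.neighborFinset u ∩ G.neighborFinset y).card :=
        card_pos.2 ⟨x, by simp [hu.2.symm, hxy.symm]⟩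
      by_cases h : G.Adj u y
      · have := har.2.1 u y h
        omega
      · have := har.2.2 u y (dist_eq_two_of_common hu.2.symm hxy hu.1 h)
        omega
    exact ⟨id, fun u hu => absurd hu (hempty u), fun u hu => absurd hu (hempty u)⟩
  · set L := (G.neighborFinset x).erase y with hL
    set R := (G.neighborFinset y).erase x with hR
    let t : L → Finset V := fun u => R.filter fun v => u.1 = v ∨ G.Adj u v
    have hall : ∀ s : Finset L, s.card ≤ (s.biUnion t).card := by
      intro s
      have hTR : s.biUnion t ⊆ R := biUnion_subset.2 fun u _ => filter_subset _ _
      have key : s.card * (β - 1) ≤ (s.biUnion t).card * (β - 1) := by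
        calc s.card * (β - 1)
            = ∑ u ∈ s, ∑ v ∈ R, matchWeight G (β - α) u v := by
              rw [sum_congr rfl fun u _ => sum_matchWeight har hba hxy u.2]
              simp
          _ = ∑ u ∈ s, ∑ v ∈ s.biUnion t, matchWeight G (β - α) u v := by
              refine sum_congr rfl fun u hu => (sum_subset hTR fun v hv hvT => ?_).symm
              have hnot : ¬ (u.1 = v ∨ G.Adj u v) := fun h =>
                hvT (mem_biUnion.2 ⟨u, hu, mem_filter.2 ⟨hv, h⟩⟩)
              push Not at hnot
              simp [matchWeight, hnot.1, hnot.2]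
          _ = ∑ v ∈ s.biUnion t, ∑ u ∈ s, matchWeight G (β - α) u v := sum_comm
          _ ≤ ∑ v ∈ s.biUnion t, ∑ u : L, matchWeight G (β - α) u v :=
              sum_le_sum fun v _ => sum_le_sum_of_subset (subset_univ s)
          _ = ∑ v ∈ s.biUnion t, (β - 1) := by
              refine sum_congr rfl fun v hv => ?_
              rw [← sum_matchWeight har hba hxy.symm (hTR hv), ← hL,
                sum_coe_sort L (fun u => matchWeight G (β - α) u v)]
              exact sum_congr rfl fun u _ => matchWeight_comm _ _ _ _
          _ = (s.biUnion t).card * (β - 1) := by simp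
      exact Nat.le_of_mul_le_mul_right key (by omega)
    obtain ⟨f, hf, hft⟩ := (all_card_le_biUnion_card_iff_exists_injective t).1 hall
    refine ⟨fun u => if h : u ∈ L then f ⟨u, h⟩ else u, fun u hu v hv huv => ?_, fun u hu => ?_⟩
    · have hu' : u ∈ L := hu
      have hv' : v ∈ L := hv
      simp only [hu', hv', dif_pos] at huv
      exact congrArg Subtype.val (hf huv)
    · have := mem_filter.1 (hft ⟨u, hu⟩)
      simpa only [hu, dif_pos] using this

/-- An edge set containing all edges between a vertex set `S` and its complement has at least `d`
elements, as soon as there is such an edge. -/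
lemma degree_le_of_cut {V : Type*} [Fintype V] {G : SimpleGraph V} {d α β : ℕ}
    (har : IsAmplyRegular G d α β) (hba : α ≤ β) (hb1 : β ≠ 1) {x y : V} (hxy : G.Adj x y)
    {S : Set V} (hx : x ∈ S) (hy : y ∉ S) {F : Finset (Sym2 V)}
    (hF : ∀ a ∈ S, ∀ b ∉ S, G.Adj a b → s(a, b) ∈ F) : d ≤ F.card := by
  obtain ⟨f, hinj, hf⟩ := exists_matching har hba hb1 hxy
  -- `g u` is the first edge, oriented out of `S`, along which the walk `x, u, f u, y` leaves `S`.
  let g : V → V × V := fun u =>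
    if u ∉ S then (x, u) else if f u ∈ S then (f u, y) else (u, f u)
  have hmem : ∀ u ∈ G.neighborFinset x, u = y ∨ u ∈ (G.neighborFinset x).erase y := by
    intro u hu
    by_cases h : u = y
    · exact Or.inl h
    · exact Or.inr (mem_erase.2 ⟨h, hu⟩)
  have hprop : ∀ u ∈ (G.neighborFinset x).erase y,
      u ≠ y ∧ G.Adj x u ∧ f u ≠ x ∧ G.Adj y (f u) ∧ (u = f u ∨ G.Adj u (f u)) := by
    intro u hu
    have h1 := hf u hu
    rw [mem_erase, mem_neighborFinset] at hu h1
    exact ⟨hu.1, hu.2, h1.1.1, h1.1.2, h1.2⟩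
  have hg : ∀ u ∈ G.neighborFinset x,
      (g u).1 ∈ S ∧ (g u).2 ∉ S ∧ G.Adj (g u).1 (g u).2 := by
    intro u hu
    have hadj : G.Adj x u := by simpa using hu
    by_cases h : u ∈ S
    · have huL : u ∈ (G.neighborFinset x).erase y :=
        (hmem u hu).resolve_left fun h' => hy (h' ▸ h)
      obtain ⟨-, -, -, h4, h5⟩ := hprop u huL
      by_cases h' : f u ∈ S
      · simpa [g, h, h', hy] using h4.symm
      · have hne : u ≠ f u := fun e => h' (e ▸ h)
        simpa [g, h, h'] using h5.resolve_left hne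
    · simpa [g, h, hx] using hadj
  have hginj : Set.InjOn g (G.neighborFinset x) := by
    intro u hu v hv huv
    have hxu : G.Adj x u := by simpa using hu
    have hxv : G.Adj x v := by simpa using hv
    have hL : ∀ w ∈ G.neighborFinset x, w ∈ S → w ∈ (G.neighborFinset x).erase y :=
      fun w hw hwS => (hmem w hw).resolve_left fun h' => hy (h' ▸ hwS)
    by_cases h1 : u ∈ S <;> by_cases h2 : v ∈ S
    · have p1 := hprop u (hL u hu h1)
      have p2 := hprop v (hL v hv h2)
      have n1 := p1.2.2.2.1.ne
      have n2 := p2.2.2.2.1.ne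
      have key : f u = f v → u = v := fun h => hinj (hL u hu h1) (hL v hv h2) h
      by_cases h3 : f u ∈ S <;> by_cases h4 : f v ∈ S <;>
        simp [g, h1, h2, h3, h4] at huv <;> grind
    · have p1 := hprop u (hL u hu h1)
      by_cases h3 : f u ∈ S <;> simp [g, h1, h2, h3] at huv <;> grind [hxu.ne]
    · have p2 := hprop v (hL v hv h2)
      by_cases h3 : f v ∈ S <;> simp [g, h1, h2, h3] at huv <;> grind [hxv.ne]
    · simpa [g, h1, h2] using huv
  rw [← har.1 x, ← card_neighborFinset_eq_degree]
  refine card_le_card_of_injOn (fun u => s((g u).1, (g u).2))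
    (fun u hu => ?_) (fun u hu v hv huv => ?_)
  · obtain ⟨h1, h2, h3⟩ := hg u hu
    exact hF _ h1 _ h2 h3
  · obtain ⟨h1, h2, -⟩ := hg u hu
    obtain ⟨h3, h4, -⟩ := hg v hv
    refine hginj hu hv ?_
    rcases Sym2.eq_iff.1 huv with ⟨e1, e2⟩ | ⟨e1, e2⟩
    · exact Prod.ext e1 e2
    · exact absurd (e1 ▸ h1) h4

/-- Any finite connected amply regular graph with parameters `(d, α, β)` such that
`β ≥ α` and `β ≠ 1` has edge-connectivity `k'(G) = d`. -/
theorem edgeConnectivity_of_amplyRegular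
    {V : Type*} [Fintype V] (G : SimpleGraph V) (d α β : ℕ)
    (hconn : G.Connected)
    (har : IsAmplyRegular G d α β) (hba : α ≤ β) (hb1 : β ≠ 1) :
    edgeConnectivity G = d := by
  obtain ⟨x⟩ := hconn.nonempty
  unfold edgeConnectivity
  rcases subsingleton_or_nontrivial V with hV | hV
  · -- No edge set disconnects a single vertex: the infimum is `sInf ∅ = 0`.
    have hd : d = 0 := by
      rw [← har.1 x, ← card_neighborFinset_eq_degree, card_eq_zero, eq_empty_iff_forall_notMem]
      intro u hu
      exact ((mem_neighborFinset _ _ _).1 hu).ne (Subsingleton.elim _ _)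
    rw [hd, Nat.sInf_eq_zero]
    right
    rw [Set.eq_empty_iff_forall_notMem]
    rintro n ⟨F, -, -, hF⟩
    have : Nonempty V := ⟨x⟩
    exact hF ⟨fun a b => Subsingleton.elim a b ▸ Reachable.refl a⟩
  · have hstar : d ∈ {n : ℕ | ∃ F : Finset (Sym2 V), F.card = n ∧
        (F : Set (Sym2 V)) ⊆ G.edgeSet ∧
        ¬ (G.deleteEdges (F : Set (Sym2 V))).Connected} := by
      refine ⟨G.incidenceFinset x, ?_, ?_, fun h => ?_⟩
      · rw [card_incidenceFinset_eq_degree, har.1 x]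
      · rw [coe_incidenceFinset]
        exact G.incidenceSet_subset x
      · obtain ⟨z, hz⟩ := h.preconnected.exists_adj_of_nontrivial x
        rw [deleteEdges_adj, coe_incidenceFinset] at hz
        exact hz.2 ⟨hz.1, Sym2.mem_mk_left _ _⟩
    refine le_antisymm (Nat.sInf_le hstar) (le_csInf ⟨d, hstar⟩ ?_)
    rintro n ⟨F, rfl, -, hF⟩
    have hpre : ¬ (G.deleteEdges (F : Set (Sym2 V))).Preconnected :=
      fun h => hF ⟨h⟩
    simp only [Preconnected, not_forall] at hpre
    obtain ⟨a, b, hab⟩ := hpre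
    obtain ⟨w⟩ := hconn.preconnected a b
    obtain ⟨e, -, h1, h2⟩ := w.exists_boundary_dart
      {v | (G.deleteEdges (F : Set (Sym2 V))).Reachable a v} (Reachable.refl a) hab
    refine degree_le_of_cut har hba hb1 e.adj h1 h2 fun u hu v hv huv => ?_
    by_contra hnot
    exact hv (hu.trans (Adj.reachable (deleteEdges_adj.2 ⟨huv, by simpa using hnot⟩)))
end
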